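/- Let (X_n, p_{n+1} : X_{n+1} → X_n)_{n ≥ 0} be a tower of fibrations of pointed topological spaces, with a chosen basepoint of lim_n X_n whose images give the basepoints of each X_n. Then there is a short exact sequence of pointed sets 1 → lim¹_n π_1 X_n → π_0(lim_n X_n) → lim_n π_0 X_n → 1: the map π_0(lim_n X_n) → lim_n π_0 X_n induced by the projections is surjective, and its kernel (the preimage of the basepoint) is in natural bijection with the pointed set lim¹_n π_1 X_n. -/

import Mathlib

open scoped unitInterval Topology Topology.Homotopy

noncomputable section

/-- A map is a *Serre fibration* if it has the homotopy lifting property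
with respect to all cubes `I^k`. -/
def IsSerreFibration {E B : Type} [TopologicalSpace E] [TopologicalSpace B]
    (p : C(E, B)) : Prop :=
  ∀ (k : ℕ) (f : C((Fin k → I), E)) (H : C(I × (Fin k → I), B)),
    (∀ q, H (0, q) = p (f q)) →
      ∃ G : C(I × (Fin k → I), E),
        (∀ q, G (0, q) = f q) ∧ ∀ z, p (G z) = H z

/-- The inverse limit of a tower of spaces. -/
def TowerLim (X : ℕ → Type) [∀ n, TopologicalSpace (X n)]
    (p : ∀ n, C(X (n + 1), X n)) : Type :=
  { z : ∀ n, X n // ∀ n, p n (z (n + 1)) = z n }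

instance {X : ℕ → Type} [∀ n, TopologicalSpace (X n)] (p : ∀ n, C(X (n + 1), X n)) :
    TopologicalSpace (TowerLim X p) :=
  instTopologicalSpaceSubtype

/-- The projection from the inverse limit of a tower to the `n`th space. -/
def TowerLim.proj {X : ℕ → Type} [∀ n, TopologicalSpace (X n)]
    {p : ∀ n, C(X (n + 1), X n)} (n : ℕ) : C(TowerLim X p, X n) :=
  ⟨fun z => z.1 n, (continuous_apply n).comp continuous_subtype_val⟩

/-- The map induced on homotopy groups (in particular on `π_k` for `N = Fin k`)
by a continuous map `f` with `f x = y`. -/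
def piMap {X Y : Type} [TopologicalSpace X] [TopologicalSpace Y] (N : Type)
    (f : C(X, Y)) {x : X} {y : Y} (hf : f x = y) :
    HomotopyGroup N X x → HomotopyGroup N Y y :=
  Quotient.map
    (fun g => (⟨f.comp g.1, fun q hq => by
        rw [ContinuousMap.comp_apply, g.2 q hq, hf]⟩ : GenLoop N Y y))
    (fun g h H => H.map fun F => F.compContinuousMap f)


/-- The map `π_k (lim_n X_n) → π_k (X n)` induced by the projection `TowerLim.proj n`,
for the basepoint `⟨x, hx⟩` of the inverse limit. -/
def piProjMap {X : ℕ → Type} [∀ n, TopologicalSpace (X n)] {p : ∀ n, C(X (n + 1), X n)}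
    (k : ℕ) {x : ∀ n, X n} (hx : ∀ n, p n (x (n + 1)) = x n) (n : ℕ) :
    HomotopyGroup (Fin k) (TowerLim X p) (⟨x, hx⟩ : TowerLim X p) →
      HomotopyGroup (Fin k) (X n) (x n) :=
  piMap (Fin k) (TowerLim.proj n) rfl

/-- The map `π_k (X (n+1)) → π_k (X n)` induced by the map `p n` of the tower. -/
def piTowerMap {X : ℕ → Type} [∀ n, TopologicalSpace (X n)] {p : ∀ n, C(X (n + 1), X n)}
    (k : ℕ) {x : ∀ n, X n} (hx : ∀ n, p n (x (n + 1)) = x n) (n : ℕ) :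
    HomotopyGroup (Fin k) (X (n + 1)) (x (n + 1)) → HomotopyGroup (Fin k) (X n) (x n) :=
  piMap (Fin k) (p n) (hx n)

/-- The distinguished basepoint of `HomotopyGroup N X x`: the class of the constant map. -/
def piConst {X : Type} [TopologicalSpace X] (N : Type) (x : X) : HomotopyGroup N X x :=
  ⟦GenLoop.const⟧

/-! ### Relative lifting -/

section RelLift

/-- Height coordinate of the collapse map of the square. -/
def sqFs (v u : ℝ) : ℝ := min 1 (v + max 0 (|4 * u - 2| - (1 - v)))

/-- Width coordinate of the collapse map of the square. -/
def sqFt (v u : ℝ) : ℝ := (max (-(1 - v)) (min (4 * u - 2) (1 - v)) + 1) / 2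

/-- Height coordinate of the section of the collapse map. -/
def sqKs (s t : ℝ) : ℝ := min s (1 - |2 * t - 1|)

/-- Width coordinate of the section of the collapse map. -/
def sqKu (s t : ℝ) : ℝ :=
  ((2 * t - 1) + max 0 (s + (2 * t - 1) - 1) - max 0 (s - (2 * t - 1) - 1) + 2) / 4

@[fun_prop]
lemma continuous_sqFs : Continuous fun z : ℝ × ℝ => sqFs z.1 z.2 := by
  unfold sqFs
  fun_prop

@[fun_prop]
lemma continuous_sqFt : Continuous fun z : ℝ × ℝ => sqFt z.1 z.2 := by
  unfold sqFt
  fun_prop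

@[fun_prop]
lemma continuous_sqKs : Continuous fun z : ℝ × ℝ => sqKs z.1 z.2 := by
  unfold sqKs
  fun_prop

@[fun_prop]
lemma continuous_sqKu : Continuous fun z : ℝ × ℝ => sqKu z.1 z.2 := by
  unfold sqKu
  fun_prop

lemma sqFs_mem {v u : ℝ} (h : 0 ≤ v) : sqFs v u ∈ I := by
  unfold sqFs
  refine ⟨le_min zero_le_one (add_nonneg h (le_max_left _ _)), min_le_left _ _⟩

lemma sqFt_mem {v u : ℝ} (h : 0 ≤ v) (h1 : v ≤ 1) : sqFt v u ∈ I := by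
  unfold sqFt
  constructor
  · have := le_max_left (-(1 - v)) (min (4 * u - 2) (1 - v)); linarith
  · have : max (-(1 - v)) (min (4 * u - 2) (1 - v)) ≤ 1 :=
      max_le (by linarith) ((min_le_right _ _).trans (by linarith))
    linarith

lemma sqKs_mem {s t : ℝ} (hs : s ∈ I) (ht : t ∈ I) : sqKs s t ∈ I := by
  obtain ⟨h1, h2⟩ := hs
  obtain ⟨h3, h4⟩ := ht
  unfold sqKs
  refine ⟨le_min h1 ?_, (min_le_left _ _).trans h2⟩
  have : |2 * t - 1| ≤ 1 := abs_le.2 ⟨by linarith, by linarith⟩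
  linarith

lemma sqKu_mem {s t : ℝ} (hs : s ∈ I) (ht : t ∈ I) : sqKu s t ∈ I := by
  obtain ⟨h1, h2⟩ := hs
  obtain ⟨h3, h4⟩ := ht
  unfold sqKu
  constructor <;> rcases max_cases 0 (s + (2 * t - 1) - 1) with h | h <;>
    rcases max_cases 0 (s - (2 * t - 1) - 1) with h' | h' <;> linarith

lemma sqFs_K {s t : ℝ} (hs : s ∈ I) (ht : t ∈ I) : sqFs (sqKs s t) (sqKu s t) = s := by
  obtain ⟨h1, h2⟩ := hs
  obtain ⟨h3, h4⟩ := ht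
  rcases le_total (1 - s) (2 * t - 1) with h | h
  · have e : sqKs s t = 2 - 2 * t := by
      rw [sqKs, abs_of_nonneg (by linarith), min_eq_right (by linarith)]; ring
    have e' : sqKu s t = (4 * t + s - 1) / 4 := by
      rw [sqKu, max_eq_right (by linarith : 0 ≤ s + (2 * t - 1) - 1),
        max_eq_left (by linarith : s - (2 * t - 1) - 1 ≤ 0)]; ring
    rw [e, e', sqFs, abs_of_nonneg (by linarith), max_eq_right (by linarith),
      min_eq_right (by linarith)]
    ring
  rcases le_total (1 - s) (-(2 * t - 1)) with h' | h'
  · have e : sqKs s t = 2 * t := by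
      rw [sqKs, abs_of_nonpos (by linarith), min_eq_right (by linarith)]; ring
    have e' : sqKu s t = (4 * t - s + 1) / 4 := by
      rw [sqKu, max_eq_left (by linarith : s + (2 * t - 1) - 1 ≤ 0),
        max_eq_right (by linarith : 0 ≤ s - (2 * t - 1) - 1)]; ring
    rw [e, e', sqFs, abs_of_nonpos (by linarith), max_eq_right (by linarith),
      min_eq_right (by linarith)]
    ring
  · have h5 : |2 * t - 1| ≤ 1 - s := abs_le.2 ⟨by linarith, h⟩
    have e : sqKs s t = s := by
      rw [sqKs, min_eq_left (by linarith)]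
    have e' : sqKu s t = (2 * t + 1) / 4 := by
      rw [sqKu, max_eq_left (by linarith : s + (2 * t - 1) - 1 ≤ 0),
        max_eq_left (by linarith : s - (2 * t - 1) - 1 ≤ 0)]; ring
    rw [e, e', sqFs, show 4 * ((2 * t + 1) / 4) - 2 = 2 * t - 1 by ring,
      max_eq_left (by linarith), min_eq_right (by linarith)]
    ring

lemma sqFt_K {s t : ℝ} (hs : s ∈ I) (ht : t ∈ I) : sqFt (sqKs s t) (sqKu s t) = t := by
  obtain ⟨h1, h2⟩ := hs
  obtain ⟨h3, h4⟩ := ht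
  unfold sqFt sqKs sqKu
  grind

lemma sqF_bottom (u : ℝ) : sqFs 0 u = 0 ∨ sqFt 0 u = 0 ∨ sqFt 0 u = 1 := by
  unfold sqFs sqFt
  grind

/-- Collapse map of the square. -/
def sqF : C(I × I, I × I) where
  toFun z := (⟨sqFs z.1 z.2, sqFs_mem z.1.2.1⟩, ⟨sqFt z.1 z.2, sqFt_mem z.1.2.1 z.1.2.2⟩)
  continuous_toFun := by
    fun_prop

/-- Section of the collapse map of the square. -/
def sqK : C(I × I, I × I) where
  toFun z := (⟨sqKs z.1 z.2, sqKs_mem z.1.2 z.2.2⟩, ⟨sqKu z.1 z.2, sqKu_mem z.1.2 z.2.2⟩)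
  continuous_toFun := by
    fun_prop

lemma sqF_sqK (z : I × I) : sqF (sqK z) = z := by
  apply Prod.ext <;> apply Subtype.ext
  · exact sqFs_K z.1.2 z.2.2
  · exact sqFt_K z.1.2 z.2.2

lemma sqF_zero (u : I) : (sqF (0, u)).1 = 0 ∨ (sqF (0, u)).2 = 0 ∨ (sqF (0, u)).2 = 1 := by
  simp only [Subtype.ext_iff]
  exact sqF_bottom u

lemma sqK_fst {s t : I} (h : s = 0 ∨ t = 0 ∨ t = 1) : (sqK (s, t)).1 = 0 := by
  apply Subtype.ext
  change sqKs s t = 0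
  have h1 := s.2.1
  have h2 := t.2.1
  have h3 := t.2.2
  unfold sqKs
  rcases h with rfl | rfl | rfl
  · have : |2 * (t : ℝ) - 1| ≤ 1 := abs_le.2 ⟨by linarith, by linarith⟩
    simpa using this
  · simpa using h1
  · norm_num
    exact h1

variable {E B : Type} [TopologicalSpace E] [TopologicalSpace B]

/-- Homotopy lifting relative to the endpoints. -/
lemma IsSerreFibration.lift_rel {p : C(E, B)} (hp : IsSerreFibration p) {a b : E}
    (δ : Path a b) (ε : Path (p a) (p b)) (h : (δ.map p.continuous).Homotopic ε) :
    ∃ δ' : Path a b, δ.Homotopic δ' ∧ ∀ t, p (δ' t) = ε t := by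
  obtain ⟨H⟩ := h
  have H0 : ∀ z : I × I, (z.1 = 0 ∨ z.2 = 0 ∨ z.2 = 1) → H z = p (δ z.2) := by
    rintro ⟨s, t⟩ h
    rcases h with h | h | h <;> (dsimp only at h; subst h)
    · exact H.apply_zero t
    · simp
    · simp
  obtain ⟨G, hG0, hG⟩ := hp 1
    ⟨fun q => δ (sqF (0, q 0)).2, by fun_prop⟩
    ⟨fun z => H (sqF (z.1, z.2 0)), by fun_prop⟩
    (fun q => H0 _ (sqF_zero _))
  have key : ∀ s t : I, (s = 0 ∨ t = 0 ∨ t = 1) →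
      G ((sqK (s, t)).1, fun _ => (sqK (s, t)).2) = δ t := by
    intro s t h
    have h1 := sqK_fst h
    have h2 := sqF_sqK (s, t)
    rw [h1, hG0]
    change δ (sqF (0, (sqK (s, t)).2)).2 = δ t
    rw [← h1, Prod.mk.eta, h2]
  have keyp : ∀ s t : I, p (G ((sqK (s, t)).1, fun _ => (sqK (s, t)).2)) = H (s, t) := by
    intro s t
    rw [hG]
    change H (sqF ((sqK (s, t)).1, (sqK (s, t)).2)) = _
    rw [Prod.mk.eta, sqF_sqK]
  refine ⟨⟨⟨fun t => G ((sqK (1, t)).1, fun _ => (sqK (1, t)).2), by fun_prop⟩, ?_, ?_⟩,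
    ⟨⟨⟨⟨fun z => G ((sqK z).1, fun _ => (sqK z).2), by fun_prop⟩, ?_, ?_⟩, ?_⟩⟩, ?_⟩
  · simpa using key 1 0 (by simp)
  · simpa using key 1 1 (by simp)
  · intro t
    exact key 0 t (by simp)
  · intro t
    rfl
  · intro s t ht
    exact key s t (Or.inr ht)
  · intro t
    exact (keyp 1 t).trans (H.apply_one t)

/-- Path lifting. -/
lemma IsSerreFibration.lift_path {p : C(E, B)} (hp : IsSerreFibration p) (a : E) {b' : B}
    {a' : B} (ha : p a = a') (ε : Path a' b') :
    ∃ (b : E) (_ : p b = b') (δ : Path a b), ∀ t, p (δ t) = ε t := by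
  obtain ⟨G, hG0, hG⟩ := hp 0 (ContinuousMap.const _ a) ⟨fun z => ε z.1, by fun_prop⟩
    (fun q => by simp [ha])
  refine ⟨G (1, 0), by simp [hG], ⟨⟨fun t => G (t, 0), by fun_prop⟩, by simp [hG0], rfl⟩, ?_⟩
  intro t
  exact hG _

end RelLift

/-! ### Induced maps on path classes -/

section PathClasses

open Path.Homotopic

variable {X Y : Type} [TopologicalSpace X] [TopologicalSpace Y]

/-- Induced map on homotopy classes of paths with transported endpoints. -/
def qm (f : C(X, Y)) {a b : X} {a' b' : Y} (ha : f a = a') (hb : f b = b')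
    (q : Path.Homotopic.Quotient a b) : Path.Homotopic.Quotient a' b' :=
  (q.map f).cast ha.symm hb.symm

variable (f : C(X, Y)) {a b c : X} {a' b' c' : Y} (ha : f a = a') (hb : f b = b') (hc : f c = c')

lemma qm_trans (q : Path.Homotopic.Quotient a b) (r : Path.Homotopic.Quotient b c) :
    qm f ha hc (q.trans r) = (qm f ha hb q).trans (qm f hb hc r) := by
  subst ha hb hc
  induction q using Path.Homotopic.Quotient.ind with | _ q
  induction r using Path.Homotopic.Quotient.ind with | _ r
  simp only [qm, Path.Homotopic.Quotient.cast_rfl_rfl]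
  rw [← Path.Homotopic.Quotient.mk_trans]
  simp only [← Path.Homotopic.Quotient.mk_map]
  rw [← Path.Homotopic.Quotient.mk_trans, Path.map_trans]

lemma qm_symm (q : Path.Homotopic.Quotient a b) :
    qm f hb ha q.symm = (qm f ha hb q).symm := by
  subst ha hb
  induction q using Path.Homotopic.Quotient.ind with | _ q
  simp only [qm, Path.Homotopic.Quotient.cast_rfl_rfl]
  rw [← Path.Homotopic.Quotient.mk_symm]
  simp only [← Path.Homotopic.Quotient.mk_map]
  rw [← Path.Homotopic.Quotient.mk_symm, Path.map_symm]

lemma qm_mk_eq (δ : Path a b) (ε : Path a' b') (h : ∀ t, f (δ t) = ε t) :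
    qm f ha hb (.mk δ) = .mk ε := by
  subst ha hb
  simp only [qm, Path.Homotopic.Quotient.cast_rfl_rfl, ← Path.Homotopic.Quotient.mk_map]
  congr 1
  ext t
  exact h t

lemma qm_lift (hp : IsSerreFibration f) (q : Path.Homotopic.Quotient a b) (ε : Path a' b')
    (h : qm f ha hb q = .mk ε) :
    ∃ δ : Path a b, .mk δ = q ∧ ∀ t, f (δ t) = ε t := by
  subst ha hb
  induction q using Path.Homotopic.Quotient.ind with | _ q
  simp only [qm, Path.Homotopic.Quotient.cast_rfl_rfl, ← Path.Homotopic.Quotient.mk_map] at h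
  obtain ⟨δ, h1, h2⟩ := hp.lift_rel q ε (Path.Homotopic.Quotient.exact h)
  exact ⟨δ, (Path.Homotopic.Quotient.eq.2 h1).symm, h2⟩

end PathClasses

section Translate

variable {X Y : Type} [TopologicalSpace X] [TopologicalSpace Y]

/-- `π_1` as loops modulo homotopy. -/
def e1 {x : X} : HomotopyGroup (Fin 1) X x ≃ Path.Homotopic.Quotient x x :=
  HomotopyGroup.pi1EquivFundamentalGroup

lemma e1_one {x : X} : e1 (1 : HomotopyGroup (Fin 1) X x) = .refl x :=
  map_one (HomotopyGroup.pi1MulEquivFundamentalGroup (X := X) (x := x))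

lemma e1_mul {x : X} (a b : HomotopyGroup (Fin 1) X x) : e1 (a * b) = (e1 b).trans (e1 a) :=
  map_mul (HomotopyGroup.pi1MulEquivFundamentalGroup (X := X) (x := x)) a b

lemma e1_inv {x : X} (a : HomotopyGroup (Fin 1) X x) : e1 a⁻¹ = (e1 a).symm :=
  map_inv (HomotopyGroup.pi1MulEquivFundamentalGroup (X := X) (x := x)) a

lemma e1_piMap (f : C(X, Y)) {x : X} {y : Y} (hf : f x = y) (a : HomotopyGroup (Fin 1) X x) :
    e1 (piMap (Fin 1) f hf a) = qm f hf hf (e1 a) := by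
  induction a using Quotient.inductionOn with | _ a
  exact (qm_mk_eq f hf hf _ _ (fun t => rfl)).symm

/-- The class in `π_0` of a point. -/
def cls0 (x z : X) : HomotopyGroup (Fin 0) X x :=
  ⟦(genLoopHomeoOfIsEmpty (Fin 0) x).symm z⟧

lemma cls0_surj {x : X} (b : HomotopyGroup (Fin 0) X x) : ∃ z, cls0 x z = b := by
  induction b using Quotient.inductionOn with | _ b
  exact ⟨genLoopHomeoOfIsEmpty (Fin 0) x b,
    congrArg _ ((genLoopHomeoOfIsEmpty (Fin 0) x).symm_apply_apply b)⟩

lemma cls0_eq {x z w : X} : cls0 x z = cls0 x w ↔ Joined z w := by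
  rw [← (HomotopyGroup.pi0EquivZerothHomotopy (X := X) (x := x)).injective.eq_iff]
  exact Quotient.eq (r := pathSetoid X)

lemma cls0_const (x : X) : cls0 x x = piConst (Fin 0) x := rfl

lemma piMap_cls0 (f : C(X, Y)) {x : X} {y : Y} (hf : f x = y) (z : X) :
    piMap (Fin 0) f hf (cls0 x z) = cls0 y (f z) := rfl

end Translate


section Tower

lemma dep_rec {A : ℕ → Type} (R : ∀ n, A n → A (n + 1) → Prop) (a0 : A 0)
    (step : ∀ n a, ∃ a', R n a a') : ∃ s : ∀ n, A n, ∀ n, R n (s n) (s (n + 1)) := by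
  choose F hF using step
  exact ⟨fun n => Nat.rec a0 F n, fun n => hF n _⟩

variable {X : ℕ → Type} [∀ n, TopologicalSpace (X n)] {p : ∀ n, C(X (n + 1), X n)}

/-- The relation between families of loops and points of the limit. -/
def TowerRel {x : ∀ n, X n} (hx : ∀ n, p n (x (n + 1)) = x n)
    (h : ∀ n, HomotopyGroup (Fin 1) (X n) (x n)) (z : TowerLim X p) : Prop :=
  ∃ γ : ∀ n, Path.Homotopic.Quotient (x n) (z.1 n),
    ∀ n, (e1 (h n)).trans (qm (p n) (hx n) (z.2 n) (γ (n + 1))) = γ n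

lemma towerRel_exists (hfib : ∀ n, IsSerreFibration (p n))
    {x : ∀ n, X n} (hx : ∀ n, p n (x (n + 1)) = x n)
    (h : ∀ n, HomotopyGroup (Fin 1) (X n) (x n)) : ∃ z, TowerRel hx h z := by
  obtain ⟨s, hs⟩ := dep_rec (A := fun n => Σ z : X n, Path.Homotopic.Quotient (x n) z)
    (fun n a a' => ∃ hz : p n a'.1 = a.1, (e1 (h n)).trans (qm (p n) (hx n) hz a'.2) = a.2)
    ⟨x 0, .refl _⟩ (by
      rintro n ⟨z, γ⟩
      obtain ⟨ε, hε⟩ := Path.Homotopic.Quotient.mk_surjective ((e1 (h n)).symm.trans γ)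
      obtain ⟨b, hb, δ, hδ⟩ := (hfib n).lift_path (x (n + 1)) (hx n) ε
      refine ⟨⟨b, .mk δ⟩, hb, ?_⟩
      dsimp only
      rw [qm_mk_eq (p n) (hx n) hb δ ε hδ, hε, ← Path.Homotopic.Quotient.trans_assoc,
        Path.Homotopic.Quotient.trans_symm, Path.Homotopic.Quotient.refl_trans])
  choose hz hs using hs
  exact ⟨⟨fun n => (s n).1, hz⟩, fun n => (s n).2, hs⟩

lemma towerRel_of_joined {x : ∀ n, X n} (hx : ∀ n, p n (x (n + 1)) = x n) (z : TowerLim X p)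
    (hz : ∀ n, Joined (x n) (z.1 n)) : ∃ h, TowerRel hx h z := by
  let γ := fun n => (hz n).some
  refine ⟨fun n => e1.symm ((Path.Homotopic.Quotient.mk (γ n)).trans
    (qm (p n) (hx n) (z.2 n) (.mk (γ (n + 1)))).symm), fun n => .mk (γ n), fun n => ?_⟩
  rw [Equiv.apply_symm_apply, Path.Homotopic.Quotient.trans_assoc,
    Path.Homotopic.Quotient.symm_trans, Path.Homotopic.Quotient.trans_refl]

lemma joined_of_classes (hfib : ∀ n, IsSerreFibration (p n)) (z z' : TowerLim X p)
    (D : ∀ n, Path.Homotopic.Quotient (z.1 n) (z'.1 n))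
    (hD : ∀ n, qm (p n) (z.2 n) (z'.2 n) (D (n + 1)) = D n) : Joined z z' := by
  obtain ⟨δ0, hδ0⟩ := Path.Homotopic.Quotient.mk_surjective (D 0)
  obtain ⟨s, hs⟩ := dep_rec (A := fun n => {δ : Path (z.1 n) (z'.1 n) // .mk δ = D n})
    (fun n a a' => ∀ t, p n (a'.1 t) = a.1 t) ⟨δ0, hδ0⟩ (by
      rintro n ⟨ε, hε⟩
      obtain ⟨δ, h1, h2⟩ := qm_lift (p n) (z.2 n) (z'.2 n) (hfib n) (D (n + 1)) ε
        ((hD n).trans hε.symm)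
      exact ⟨⟨δ, h1⟩, h2⟩)
  refine ⟨⟨⟨fun t => ⟨fun n => (s n).1 t, fun n => hs n t⟩, ?_⟩, ?_, ?_⟩⟩
  · exact Continuous.subtype_mk (continuous_pi fun n => (s n).1.continuous) _
  · exact Subtype.ext (funext fun n => (s n).1.source)
  · exact Subtype.ext (funext fun n => (s n).1.target)

lemma classes_of_joined (z z' : TowerLim X p) (h : Joined z z') :
    ∃ D : ∀ n, Path.Homotopic.Quotient (z.1 n) (z'.1 n),
      ∀ n, qm (p n) (z.2 n) (z'.2 n) (D (n + 1)) = D n := by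
  obtain ⟨δ⟩ := h
  exact ⟨fun n => .mk (δ.map (TowerLim.proj n).continuous),
    fun n => qm_mk_eq _ _ _ _ _ fun t => (δ t).2 n⟩

section Algebra

variable {T : Type} [TopologicalSpace T] {a b c d : T}

lemma q_cancel1 (q : Path.Homotopic.Quotient a b) (r : Path.Homotopic.Quotient a c) :
    q.trans (q.symm.trans r) = r := by
  rw [← Path.Homotopic.Quotient.trans_assoc, Path.Homotopic.Quotient.trans_symm,
    Path.Homotopic.Quotient.refl_trans]

lemma q_cancel2 (q : Path.Homotopic.Quotient b a) (r : Path.Homotopic.Quotient a c) :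
    q.symm.trans (q.trans r) = r := by
  rw [← Path.Homotopic.Quotient.trans_assoc, Path.Homotopic.Quotient.symm_trans,
    Path.Homotopic.Quotient.refl_trans]

lemma q_symm_trans (q : Path.Homotopic.Quotient a b) (r : Path.Homotopic.Quotient b c) :
    (q.trans r).symm = r.symm.trans q.symm := by
  rw [← q_cancel2 (q.trans r) (r.symm.trans q.symm), Path.Homotopic.Quotient.trans_assoc,
    q_cancel1, Path.Homotopic.Quotient.trans_symm, Path.Homotopic.Quotient.trans_refl]

lemma q_symm_symm (q : Path.Homotopic.Quotient a b) : q.symm.symm = q := by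
  have := q_cancel2 q.symm q
  rwa [Path.Homotopic.Quotient.symm_trans, Path.Homotopic.Quotient.trans_refl] at this

end Algebra

open Path.Homotopic.Quotient in
lemma towerRel_joined_iff (hfib : ∀ n, IsSerreFibration (p n))
    {x : ∀ n, X n} (hx : ∀ n, p n (x (n + 1)) = x n)
    {h h' : ∀ n, HomotopyGroup (Fin 1) (X n) (x n)} {z z' : TowerLim X p}
    (hz : TowerRel hx h z) (hz' : TowerRel hx h' z') :
    Joined z z' ↔ ∃ g : ∀ n, HomotopyGroup (Fin 1) (X n) (x n),
          ∀ n, h' n = (piTowerMap 1 hx n (g (n + 1)))⁻¹ * h n * g n := by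
  obtain ⟨γ, hγ⟩ := hz
  obtain ⟨γ', hγ'⟩ := hz'
  constructor
  · intro hj
    obtain ⟨D, hD⟩ := classes_of_joined z z' hj
    refine ⟨fun n => e1.symm ((γ' n).trans ((D n).symm.trans (γ n).symm)), fun n => ?_⟩
    apply e1.injective
    rw [e1_mul, e1_mul, e1_inv, piTowerMap, e1_piMap, Equiv.apply_symm_apply,
      Equiv.apply_symm_apply, qm_trans _ _ (z'.2 n), qm_trans _ _ (z.2 n), qm_symm _ (z.2 n),
      qm_symm _ _ (z.2 n), hD, ← hγ n, ← hγ' n]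
    simp only [q_symm_trans, q_symm_symm, trans_assoc, q_cancel1, q_cancel2,
      trans_symm, symm_trans, trans_refl, refl_trans]
  · rintro ⟨g, hg⟩
    refine joined_of_classes hfib z z'
      (fun n => (γ n).symm.trans ((e1 (g n)).symm.trans (γ' n))) fun n => ?_
    have h1 := congrArg e1 (hg n)
    rw [e1_mul, e1_mul, e1_inv, piTowerMap, e1_piMap] at h1
    rw [qm_trans _ _ (hx n), qm_trans _ _ (hx n), qm_symm _ _ (z.2 n), qm_symm _ _ (hx n),
      ← hγ n, ← hγ' n, h1]
    simp only [q_symm_trans, q_symm_symm, trans_assoc, q_cancel1, q_cancel2,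
      trans_symm, symm_trans, trans_refl, refl_trans]

lemma towerRel_one {x : ∀ n, X n} (hx : ∀ n, p n (x (n + 1)) = x n) :
    TowerRel hx 1 (⟨x, hx⟩ : TowerLim X p) := by
  refine ⟨fun n => .refl _, fun n => ?_⟩
  rw [Pi.one_apply, e1_one, Path.Homotopic.Quotient.refl_trans]
  exact qm_mk_eq _ _ _ (Path.refl _) (Path.refl _) fun t => hx n

lemma TowerRel.joined {x : ∀ n, X n} {hx : ∀ n, p n (x (n + 1)) = x n}
    {h : ∀ n, HomotopyGroup (Fin 1) (X n) (x n)} {z : TowerLim X p} (hz : TowerRel hx h z)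
    (n : ℕ) : Joined (x n) (z.1 n) := by
  obtain ⟨γ, -⟩ := hz
  obtain ⟨δ, -⟩ := Path.Homotopic.Quotient.mk_surjective (γ n)
  exact ⟨δ⟩

lemma pi0_surj (hfib : ∀ n, IsSerreFibration (p n))
    {x : ∀ n, X n} (hx : ∀ n, p n (x (n + 1)) = x n)
    (a : ∀ n, HomotopyGroup (Fin 0) (X n) (x n))
    (ha : ∀ n, piTowerMap 0 hx n (a (n + 1)) = a n) :
    ∃ b, ∀ n, piProjMap 0 hx n b = a n := by
  choose y hy using fun n => cls0_surj (a n)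
  have hj : ∀ n, Joined (p n (y (n + 1))) (y n) := by
    intro n
    have := ha n
    rw [← hy n, ← hy (n + 1)] at this
    exact cls0_eq.1 this
  obtain ⟨s, hs⟩ := dep_rec (A := fun n => {z : X n // Joined (y n) z})
    (fun n a a' => p n a'.1 = a.1) ⟨y 0, .refl _⟩ (by
      rintro n ⟨z, hz⟩
      obtain ⟨ε⟩ := (hj n).trans hz
      obtain ⟨b, hb, δ, -⟩ := (hfib n).lift_path (y (n + 1)) rfl ε
      exact ⟨⟨b, ⟨δ⟩⟩, hb⟩)
  refine ⟨cls0 _ ⟨fun n => (s n).1, hs⟩, fun n => ?_⟩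
  rw [← hy n]
  exact cls0_eq.2 (s n).2.symm

end Tower

/-- **Theorem 2.1 (main theorem), case `k = 0`.**  Let `(X n, p n)` be a tower of fibrations
of pointed topological spaces, with basepoints the components `x n` of a chosen point of the
inverse limit.  Then there is a short exact sequence of pointed sets
`1 → lim¹_n π_1 X_n → π_0 (lim_n X_n) → lim_n π_0 X_n → 1`:
the map `P : π_0 (lim_n X_n) → lim_n π_0 X_n` induced by the projections is surjective, and
its kernel (the preimage of the basepoint) is in natural bijection with the pointed set
`lim¹_n π_1 X_n` (the orbit set of the `lim¹` action on `∏_n π_1 X_n`, here encoded by a map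
`Φ` defined on `∏_n π_1 X_n` that identifies two families exactly when they lie in the same
orbit, sends the identity to the basepoint, and has image exactly the kernel of `P`). -/
theorem pi0_towerLim_shortExact
    (X : ℕ → Type) [∀ n, TopologicalSpace (X n)] (p : ∀ n, C(X (n + 1), X n))
    (hfib : ∀ n, IsSerreFibration (p n))
    (x : ∀ n, X n) (hx : ∀ n, p n (x (n + 1)) = x n) :
    -- `P` is surjective onto `lim_n π_0 X_n`:
    (∀ a : ∀ n, HomotopyGroup (Fin 0) (X n) (x n),
      (∀ n, piTowerMap 0 hx n (a (n + 1)) = a n) →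
      ∃ b, ∀ n, piProjMap 0 hx n b = a n) ∧
    -- the pointed set `lim¹_n π_1 X_n` is in bijection with the kernel of `P`:
    ∃ Φ : (∀ n, HomotopyGroup (Fin 1) (X n) (x n)) →
        HomotopyGroup (Fin 0) (TowerLim X p) (⟨x, hx⟩ : TowerLim X p),
      -- `Φ` identifies exactly the orbits of the `lim¹` action, so it descends to an
      -- injection of the orbit set `lim¹_n π_1 X_n`:
      (∀ h h', Φ h = Φ h' ↔
        ∃ g : ∀ n, HomotopyGroup (Fin 1) (X n) (x n),
          ∀ n, h' n = (piTowerMap 1 hx n (g (n + 1)))⁻¹ * h n * g n) ∧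
      -- the bijection is pointed: the orbit of the identity goes to the basepoint:
      (Φ 1 = piConst (Fin 0) (⟨x, hx⟩ : TowerLim X p)) ∧
      -- the image of `Φ` is exactly the kernel of `P`:
      (∀ b, (∀ n, piProjMap 0 hx n b = piConst (Fin 0) (x n)) ↔ ∃ h, Φ h = b) := by
  refine ⟨fun a ha => pi0_surj hfib hx a ha, ?_⟩
  choose z hz using fun h => towerRel_exists hfib hx h
  have hrefl : ∀ h : ∀ n, HomotopyGroup (Fin 1) (X n) (x n),
      ∃ g : ∀ n, HomotopyGroup (Fin 1) (X n) (x n),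
        ∀ n, h n = (piTowerMap 1 hx n (g (n + 1)))⁻¹ * h n * g n := fun h =>
    (towerRel_joined_iff hfib hx (hz h) (hz h)).1 (Joined.refl _)
  refine ⟨fun h => cls0 _ (z h), fun h h' => ?_, ?_, fun b => ⟨fun hb => ?_, ?_⟩⟩
  · exact cls0_eq.trans (towerRel_joined_iff hfib hx (hz h) (hz h'))
  · exact cls0_eq.2 ((towerRel_joined_iff hfib hx (hz 1) (towerRel_one hx)).2 (hrefl 1))
  · obtain ⟨w, rfl⟩ := cls0_surj b
    obtain ⟨h, hw⟩ := towerRel_of_joined hx w fun n =>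
      (cls0_eq.1 (show cls0 (x n) (w.1 n) = cls0 (x n) (x n) from hb n)).symm
    exact ⟨h, cls0_eq.2 ((towerRel_joined_iff hfib hx (hz h) hw).2 (hrefl h))⟩
  · rintro ⟨h, rfl⟩ n
    exact cls0_eq.2 ((hz h).joined n).symm

end
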